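/- Propositional RPL is a conservative expansion of propositional Łukasiewicz logic: for every set Γ ∪ {φ} of formulas of the language of Ł (containing no rational constants other than 0 and 1), Γ ⊢_RPL φ if and only if Γ ⊢_Ł φ. -/

import Mathlib

/-- The rationals in the unit interval: indices of the truth constants of RPL,
and grades of graded formulas of GRPL. -/
abbrev UQ := {q : ℚ // 0 ≤ q ∧ q ≤ 1}

instance : Zero UQ := ⟨⟨0, by norm_num⟩⟩
instance : One UQ := ⟨⟨1, by norm_num⟩⟩

/-- Łukasiewicz negation on the rational unit interval: `¬q = 1 - q`. -/
def UQ.lneg (q : UQ) : UQ :=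
  ⟨1 - q.1, by obtain ⟨h0, h1⟩ := q.2; constructor <;> linarith⟩

/-- Łukasiewicz implication on the rational unit interval: `q → r = min 1 (1 - q + r)`. -/
def UQ.limp (q r : UQ) : UQ :=
  ⟨min 1 (1 - q.1 + r.1), by
    obtain ⟨hq0, hq1⟩ := q.2; obtain ⟨hr0, hr1⟩ := r.2
    exact ⟨le_min (by norm_num) (by linarith), min_le_left _ _⟩⟩

/-- Łukasiewicz strong conjunction on the rational unit interval:
`q ⊙ r = max 0 (q + r - 1)`. -/
def UQ.lmul (q r : UQ) : UQ :=
  ⟨max 0 (q.1 + r.1 - 1), by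
    obtain ⟨hq0, hq1⟩ := q.2; obtain ⟨hr0, hr1⟩ := r.2
    exact ⟨le_max_left _ _, max_le (by norm_num) (by linarith)⟩⟩

/-- Formulas of the language of RPL: propositional variables, a truth constant `q̄` for
each rational `q ∈ [0,1]`, negation and implication. -/
inductive Fml : Type
  | var : ℕ → Fml
  | const : UQ → Fml
  | neg : Fml → Fml
  | imp : Fml → Fml → Fml

/-- Strong conjunction, defined: `α ⊙ β := ¬(α → ¬β)`. -/
def Fml.odot (a b : Fml) : Fml := Fml.neg (a.imp b.neg)

/-- (Min-)conjunction, defined: `α ∧ β := α ⊙ (α → β)`. -/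
def Fml.conj (a b : Fml) : Fml := a.odot (a.imp b)

/-- Equivalence `α ≡ β`, the conjunction of the two implications. -/
def Fml.eqv (a b : Fml) : Fml := (a.imp b).conj (b.imp a)

/-- Instances of the axiom schemata (A1)-(A4) of Łukasiewicz logic Ł. -/
inductive IsLukAxiom : Fml → Prop
  | a1 (φ ψ : Fml) : IsLukAxiom (φ.imp (ψ.imp φ))
  | a2 (φ ψ χ : Fml) : IsLukAxiom ((φ.imp ψ).imp ((ψ.imp χ).imp (φ.imp χ)))
  | a3 (φ ψ : Fml) : IsLukAxiom (((φ.imp ψ).imp ψ).imp ((ψ.imp φ).imp φ))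
  | a4 (φ ψ : Fml) : IsLukAxiom ((φ.neg.imp ψ.neg).imp (ψ.imp φ))

/-- Axioms of Rational Pavelka logic RPL: the axioms of Ł together with the
bookkeeping axioms (with `1̄ ≡ 1` and `0̄ ≡ 0` rendered as the provability of `1̄`
and of `¬0̄`, since the basic language `{¬, →}` has no primitive truth constants). -/
inductive IsRPLAxiom : Fml → Prop
  | luk {φ : Fml} : IsLukAxiom φ → IsRPLAxiom φ
  | book_imp (q r : UQ) :
      IsRPLAxiom (((Fml.const q).imp (Fml.const r)).eqv (Fml.const (q.limp r)))
  | book_neg (q : UQ) : IsRPLAxiom ((Fml.const q).neg.eqv (Fml.const q.lneg))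
  | book_one : IsRPLAxiom (Fml.const 1)
  | book_zero : IsRPLAxiom (Fml.const 0).neg

/-- `L` is a proof in RPL from the theory `T`: every member of the list is an axiom of RPL,
a member of `T`, or follows from two earlier members by modus ponens. -/
def IsRPLProofFrom (T : Set Fml) (L : List Fml) : Prop :=
  ∀ i : Fin L.length, IsRPLAxiom (L.get i) ∨ L.get i ∈ T ∨
    ∃ j k : Fin L.length, j < i ∧ k < i ∧ L.get k = (L.get j).imp (L.get i)

/-- `T ⊢_RPL φ`: some proof in RPL from `T` has `φ` as its last element. -/
def RPLProv (T : Set Fml) (φ : Fml) : Prop :=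
  ∃ L : List Fml, IsRPLProofFrom T L ∧ L.getLast? = some φ

/-- The fuzzy set of axioms of GRPL: (A) instances of the axioms of Ł in grade 1;
(B) each constant `q̄` in grade `q`; (C) the bookkeeping axioms in grade 1;
(D) all formulas in grade 0. -/
inductive IsGRPLAxiom : UQ → Fml → Prop
  | luk {φ : Fml} : IsLukAxiom φ → IsGRPLAxiom 1 φ
  | const (q : UQ) : IsGRPLAxiom q (Fml.const q)
  | book_neg (q : UQ) : IsGRPLAxiom 1 ((Fml.const q).neg.eqv (Fml.const q.lneg))
  | book_imp (q r : UQ) :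
      IsGRPLAxiom 1 (((Fml.const q).imp (Fml.const r)).eqv (Fml.const (q.limp r)))
  | zero (φ : Fml) : IsGRPLAxiom 0 φ

/-- `L` is a graded proof in GRPL from the set `T` of graded formulas: every member is a
graded axiom of GRPL, a member of `T`, or follows from earlier members by graded modus
ponens (from `⟨q,φ⟩` and `⟨r,φ→ψ⟩` derive `⟨q⊙r,ψ⟩`) or by lifting (from `⟨q,φ⟩` derive
`⟨r→q, r̄→φ⟩`). -/
def IsGRPLProofFrom (T : Set (UQ × Fml)) (L : List (UQ × Fml)) : Prop :=
  ∀ i : Fin L.length, IsGRPLAxiom (L.get i).1 (L.get i).2 ∨ L.get i ∈ T ∨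
    (∃ j k : Fin L.length, j < i ∧ k < i ∧
      (L.get k).2 = (L.get j).2.imp (L.get i).2 ∧
      (L.get i).1 = UQ.lmul (L.get j).1 (L.get k).1) ∨
    (∃ j : Fin L.length, ∃ r : UQ, j < i ∧
      L.get i = (UQ.limp r (L.get j).1, (Fml.const r).imp (L.get j).2))

/-- `T ⊢_GRPL ⟨q,φ⟩`: some graded proof in GRPL from `T` has `⟨q,φ⟩` as its last element. -/
def GRPLProv (T : Set (UQ × Fml)) (p : UQ × Fml) : Prop :=
  ∃ L : List (UQ × Fml), IsGRPLProofFrom T L ∧ L.getLast? = some p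

/-- The set of graded hypotheses `⟨Γ(ψ), ψ⟩` determined by a fuzzy theory `Γ`. -/
def FuzzyThy (Γ : Fml → UQ) : Set (UQ × Fml) := {p | p.1 = Γ p.2}

/-- An assignment into the standard MV-algebra `[0,1]_Ł` takes values in `[0,1]`. -/
def IsAssignment (v : ℕ → ℝ) : Prop := ∀ n, v n ∈ Set.Icc (0 : ℝ) 1

/-- Evaluation of a formula in the standard MV-algebra `[0,1]_Ł`, with each rational
constant interpreted canonically. -/
noncomputable def eval (v : ℕ → ℝ) : Fml → ℝ
  | Fml.var n => v n
  | Fml.const q => (q.1 : ℝ)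
  | Fml.neg φ => 1 - eval v φ
  | Fml.imp φ ψ => min 1 (1 - eval v φ + eval v ψ)

/-- Formulas of the language of Ł: no rational constants other than `0̄` and `1̄`. -/
inductive IsLFml : Fml → Prop
  | var (n : ℕ) : IsLFml (Fml.var n)
  | zero : IsLFml (Fml.const 0)
  | one : IsLFml (Fml.const 1)
  | neg {φ : Fml} : IsLFml φ → IsLFml φ.neg
  | imp {φ ψ : Fml} : IsLFml φ → IsLFml ψ → IsLFml (φ.imp ψ)

/-- Provability in Łukasiewicz logic Ł (over the constant-free language expanded with
the constants `0̄`, `1̄`, governed by the provability of `1̄` and of `¬0̄`):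
axioms (A1)-(A4) and modus ponens. -/
inductive LukProv (T : Set Fml) : Fml → Prop
  | ax {φ : Fml} : IsLukAxiom φ → IsLFml φ → LukProv T φ
  | one : LukProv T (Fml.const 1)
  | negzero : LukProv T (Fml.const 0).neg
  | hyp {φ : Fml} : φ ∈ T → LukProv T φ
  | mp {φ ψ : Fml} : LukProv T φ → LukProv T (φ.imp ψ) → LukProv T ψ


namespace RPLCons

/-! ### Wajsberg algebras -/

/-- Wajsberg algebras (with a convenient redundant list of laws). -/
class WA (A : Type) where
  imp : A → A → A
  neg : A → A
  one : A
  one_imp : ∀ x, imp one x = x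
  a1 : ∀ x y, imp x (imp y x) = one
  a2 : ∀ x y z, imp (imp x y) (imp (imp y z) (imp x z)) = one
  a3 : ∀ x y, imp (imp x y) y = imp (imp y x) x
  ex : ∀ x y z, imp x (imp y z) = imp y (imp x z)
  contra : ∀ x y, imp (neg x) (neg y) = imp y x
  nn : ∀ x, neg (neg x) = x
  antisymm : ∀ x y, imp x y = one → imp y x = one → x = y

local infixr:60 "⇒" => WA.imp
local prefix:75 "∼" => WA.neg

namespace WA
variable {A : Type} [WA A]

/-- Strong disjunction. -/
def add (x y : A) : A := ∼x ⇒ y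
/-- Strong conjunction. -/
def mul (x y : A) : A := ∼(x ⇒ ∼y)
/-- The bottom element. -/
def zero : A := ∼(one : A)

theorem refl (x : A) : x ⇒ x = one := by
  have := a1 x (one : A); rwa [one_imp] at this

theorem imp_one (x : A) : x ⇒ one = one := by
  have := a1 (one : A) x; rwa [one_imp] at this

theorem trans {x y z : A} (h : x ⇒ y = one) (h' : y ⇒ z = one) : x ⇒ z = one := by
  have := a2 x y z; rwa [h, h', one_imp, one_imp] at this

theorem zero_imp (x : A) : (zero : A) ⇒ x = one := by
  rw [← nn x, zero, contra, imp_one]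

theorem imp_neg (x y : A) : x ⇒ ∼y = y ⇒ ∼x := by
  rw [← contra (∼y) x, nn]

theorem neg_imp (x y : A) : ∼x ⇒ y = ∼y ⇒ x := by
  rw [← contra y (∼x), nn]

theorem add_comm (x y : A) : add x y = add y x := neg_imp x y

theorem add_assoc (x y z : A) : add (add x y) z = add x (add y z) := by
  unfold add
  rw [neg_imp _ z, ex, neg_imp z y]

theorem mul_comm (x y : A) : mul x y = mul y x := by
  unfold mul; rw [imp_neg]

theorem neg_mul (x y : A) : mul x y = ∼(add (∼x) (∼y)) := by
  unfold mul add; rw [nn]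

theorem mul_assoc (x y z : A) : mul (mul x y) z = mul x (mul y z) := by
  simp only [neg_mul, nn, add_assoc]

theorem mul_imp (x y z : A) : mul x y ⇒ z = x ⇒ y ⇒ z := by
  unfold mul
  rw [neg_imp, ex, contra]

theorem add_zero (x : A) : add x zero = x := by
  unfold add zero; rw [contra, one_imp]

theorem zero_add (x : A) : add zero x = x := by rw [add_comm, add_zero]

theorem mul_neg_self (x : A) : mul x (∼x) = zero := by
  unfold mul zero; rw [nn, refl]

theorem add_neg_self (x : A) : add x (∼x) = one := refl _

theorem mul_zero (x : A) : mul x zero = zero := by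
  unfold mul zero; rw [nn, imp_one]

theorem mul_le_left (x y : A) : mul x y ⇒ x = one := by
  rw [mul_imp, a1]

theorem le_add_left (x y : A) : x ⇒ add x y = one := by
  rw [add_comm, add, a1]

theorem imp_mono {x y : A} (z : A) (h : x ⇒ y = one) : (z ⇒ x) ⇒ (z ⇒ y) = one := by
  have := a2 z x y; rwa [ex, h, one_imp] at this

theorem imp_anti {x y : A} (z : A) (h : x ⇒ y = one) : (y ⇒ z) ⇒ (x ⇒ z) = one := by
  have := a2 x y z; rwa [h, one_imp] at this

theorem add_mono {x y : A} (z : A) (h : x ⇒ y = one) : add z x ⇒ add z y = one :=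
  imp_mono _ h

theorem mul_mono {x y : A} (z : A) (h : x ⇒ y = one) : mul z x ⇒ mul z y = one := by
  unfold mul
  rw [contra]; exact imp_mono _ (by rwa [contra])

theorem keyK {x y : A} (h : add x y = one) : add (∼y) (mul x y) = x := by
  have h' : ∼y ⇒ x = one := by rw [neg_imp]; exact h
  unfold add mul
  rw [nn, imp_neg, a3, h', one_imp]

theorem mul_imp_self (x y : A) : mul x (x ⇒ y) = mul y (y ⇒ x) := by
  unfold mul
  rw [imp_neg x, imp_neg y, ← contra y x, a3, contra]

theorem keyK' {x t : A} (h : t ⇒ x = one) : mul x (add (∼x) t) = t := by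
  unfold add
  rw [nn, mul_imp_self, h]
  unfold mul
  rw [imp_neg, one_imp, nn]

theorem assoc3 {x y z : A} (h : add x y = one) (h' : add y z = one) :
    add (mul x y) z = add x (mul y z) := by
  have e1 := keyK h
  have e2 := keyK (x := z) (y := y) (by rwa [add_comm])
  conv_lhs => rw [← e2]
  conv_rhs => rw [← e1]
  rw [mul_comm z y, ← add_assoc, add_comm (mul x y)]

theorem assoc2_le {x y z : A} (h : add x y = one) (h' : z ⇒ ∼y = one) :
    add (mul x y) z ⇒ x = one := by
  have e1 := keyK h
  have := add_mono (mul x y) h'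
  rwa [add_comm _ (∼y), e1] at this

theorem assoc2 {x y z : A} (h : add x y = one) (h' : z ⇒ ∼y = one) :
    add (mul x y) z = mul x (add y z) := by
  have e : add (∼x) (add (mul x y) z) = add y z := by
    rw [← add_assoc, mul_comm, keyK (by rwa [add_comm])]
  rw [← e, keyK' (assoc2_le h h')]

theorem assoc1 {x y z : A} (h : y ⇒ ∼x = one) (h' : y ⇒ ∼z = one)
    (h1 : add (add x y) z = one) :
    mul (add x y) z = mul x (add y z) := by
  have hy : mul (∼x) (add x y) = y := by
    have := keyK' h; rwa [nn] at this
  have e : add y z = add (∼x) (mul (add x y) z) := by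
    rw [← assoc3 _ h1, hy]
    rw [add, nn]; exact le_add_left _ _
  rw [e, keyK']
  have h2 := add_mono x h'
  rw [mul_imp, ← contra x z]
  exact h2

theorem prelin (x y : A) : ((x ⇒ y) ⇒ (y ⇒ x)) ⇒ (y ⇒ x) = one := by
  rw [ex, ← mul_imp]
  have hy : mul ((x ⇒ y) ⇒ y) (x ⇒ y) = y := by
    rw [mul_comm, mul_imp_self, a1, mul_comm]
    unfold mul
    rw [one_imp, nn]
  have h1 : mul (x ⇒ y) ((x ⇒ y) ⇒ (y ⇒ x)) ⇒ (y ⇒ x) = one := by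
    rw [mul_comm, mul_imp, refl]
  have h2 := mul_mono ((x ⇒ y) ⇒ y) h1
  rw [← mul_assoc, hy] at h2
  refine trans h2 ?_
  rw [a3, mul_imp, refl]

theorem join_mp {x c d : A} (h : (x ⇒ c) ⇒ c = one) (h' : ((x ⇒ d) ⇒ c) ⇒ c = one) :
    (d ⇒ c) ⇒ c = one := by
  have e : x ⇒ c = c := antisymm _ _ h (a1 _ _)
  have := a2 x d c
  rw [e, ex] at this
  exact trans this h'

end WA

/-! ### Chang's group of an MV-chain -/

/-- Nontrivial linearly ordered Wajsberg algebras. -/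
class WChain (A : Type) extends WA A, LinearOrder A where
  le_iff : ∀ x y : A, x ≤ y ↔ WA.imp x y = WA.one
  nontriv : (WA.zero : A) ≠ WA.one

/-- Chang's group of an MV-chain: pairs of an integer part and a fractional part. -/
@[ext] structure CG (A : Type) [WChain A] where
  n : ℤ
  a : A
  ne : a ≠ WA.one

namespace CG
open WA
variable {A : Type} [WChain A]

theorem le_one (x : A) : x ≤ one := (WChain.le_iff _ _).2 (imp_one x)
theorem zero_le (x : A) : zero ≤ x := (WChain.le_iff _ _).2 (zero_imp x)

theorem mul_ne {x : A} (y : A) (h : x ≠ one) : mul x y ≠ one := by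
  intro e
  have := mul_le_left x y
  rw [e, one_imp] at this
  exact h this

theorem of_add_ne {x y : A} (h : add x y ≠ one) : y ⇒ ∼x = one := by
  rcases le_total y (∼x) with h1 | h1
  · exact (WChain.le_iff _ _).1 h1
  · exact absurd ((WChain.le_iff _ _).1 h1) h

open Classical in
noncomputable instance : Add (CG A) where
  add p q := if h : add p.a q.a = one then ⟨p.n + q.n + 1, mul p.a q.a, mul_ne _ p.ne⟩
    else ⟨p.n + q.n, add p.a q.a, h⟩

open Classical in
theorem add_def (p q : CG A) : p + q = if h : add p.a q.a = one then
    ⟨p.n + q.n + 1, mul p.a q.a, mul_ne _ p.ne⟩ else ⟨p.n + q.n, add p.a q.a, h⟩ := rfl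

open Classical in
theorem add_n (p q : CG A) : (p + q).n = if add p.a q.a = one then p.n + q.n + 1
    else p.n + q.n := by
  rw [add_def]; split_ifs <;> rfl

open Classical in
theorem add_a (p q : CG A) : (p + q).a = if add p.a q.a = one then mul p.a q.a
    else add p.a q.a := by
  rw [add_def]; split_ifs <;> rfl

instance : Zero (CG A) := ⟨⟨0, zero, WChain.nontriv⟩⟩

theorem neg_ne {x : A} (h : x ≠ zero) : ∼x ≠ one := by
  intro e; apply h; rw [zero, ← e, nn]

open Classical in
noncomputable instance : Neg (CG A) where
  neg p := if h : p.a = zero then ⟨-p.n, zero, WChain.nontriv⟩ else ⟨-p.n - 1, ∼p.a, neg_ne h⟩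

theorem cg_comm (p q : CG A) : p + q = q + p := by
  ext
  · rw [add_n, add_n, WA.add_comm]; split_ifs <;> ring
  · rw [add_a, add_a, WA.add_comm, WA.mul_comm]

theorem cg_assoc (p q r : CG A) : p + q + r = p + (q + r) := by
  obtain ⟨l, x, hx⟩ := p
  obtain ⟨m, y, hy⟩ := q
  obtain ⟨n, z, hz⟩ := r
  by_cases h1 : add x y = one <;> by_cases h2 : add y z = one
  · have e := assoc3 h1 h2
    ext <;> simp only [add_n, add_a, h1, h2, e, if_true, WA.mul_assoc] <;> split_ifs <;> ring
  · have h3 := of_add_ne h2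
    have e := assoc2 h1 h3
    have h4 : add (mul x y) z ≠ one := by
      intro h
      have := assoc2_le h1 h3
      rw [h, one_imp] at this
      exact hx this
    have h5 : add x (add y z) = one := by
      rw [← WA.add_assoc, h1, add, ← zero, zero_imp]
    ext
    · simp only [add_n, add_a, h1, h2, h4, h5, if_true, if_false]; ring
    · simp only [add_a, h1, h2, h4, h5, if_true, if_false]; exact e
  · have h1' : add y x ≠ one := by rwa [WA.add_comm]
    have h2' : add z y = one := by rwa [WA.add_comm]
    have h3 := of_add_ne h1'
    have e := assoc2 h2' h3
    rw [WA.mul_comm z, WA.mul_comm z, WA.add_comm _ x, WA.add_comm y x] at e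
    have h4 : add x (mul y z) ≠ one := by
      intro h
      have := assoc2_le h2' h3
      rw [WA.mul_comm z, WA.add_comm, h, one_imp] at this
      exact hz this
    have h5 : add (add x y) z = one := by
      rw [WA.add_assoc, h2]; exact imp_one _
    ext
    · simp only [add_n, add_a, h1, h2, h4, h5, if_true, if_false]; ring
    · simp only [add_a, h1, h2, h4, h5, if_true, if_false]; exact e.symm
  · by_cases h3 : add (add x y) z = one
    · have h3' := h3
      rw [WA.add_assoc] at h3'
      have e := assoc1 (of_add_ne h1) (of_add_ne (x := z) (y := y) (by rwa [WA.add_comm])) h3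
      ext
      · simp only [add_n, add_a, h1, h2, h3, h3', if_true, if_false]; ring
      · simp only [add_n, add_a, h1, h2, h3, h3', if_true, if_false, e]
    · have h3' := h3
      rw [WA.add_assoc] at h3'
      ext
      · simp only [add_n, add_a, h1, h2, h3, h3', if_false]; ring
      · simp only [add_a, h1, h2, h3, h3', if_false, WA.add_assoc]

theorem cg_zero_add (p : CG A) : 0 + p = p := by
  have h1 : (0 : CG A).a = zero := rfl
  have h2 : (0 : CG A).n = 0 := rfl
  ext <;> simp [add_n, add_a, h1, h2, WA.zero_add, p.ne]

theorem cg_neg_add (p : CG A) : -p + p = 0 := by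
  rw [cg_comm]
  have h1 : (0 : CG A).a = zero := rfl
  have h2 : (0 : CG A).n = 0 := rfl
  by_cases h : p.a = zero
  · have e : -p = ⟨-p.n, zero, WChain.nontriv⟩ := dif_pos h
    have h0 : (zero : A) ≠ one := WChain.nontriv
    rw [e]
    ext <;> simp [add_n, add_a, h1, h2, h, WA.zero_add, h0]
  · have e : -p = ⟨-p.n - 1, ∼p.a, neg_ne h⟩ := dif_neg h
    rw [e]
    ext <;> simp [add_n, add_a, h1, h2, add_neg_self, mul_neg_self]
    ring

noncomputable instance : AddCommGroup (CG A) where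
  add_assoc := cg_assoc
  zero_add := cg_zero_add
  add_zero p := by rw [cg_comm, cg_zero_add]
  neg_add_cancel := cg_neg_add
  add_comm := cg_comm
  nsmul := nsmulRec
  zsmul := zsmulRec

noncomputable instance : LinearOrder (CG A) :=
  LinearOrder.lift' (fun p : CG A => toLex (p.n, p.a)) (by
    intro p q h
    have h' : (p.n, p.a) = (q.n, q.a) := h
    simp only [Prod.mk.injEq] at h'
    exact CG.ext h'.1 h'.2)

theorem le_def (p q : CG A) : p ≤ q ↔ p.n < q.n ∨ p.n = q.n ∧ p.a ≤ q.a := by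
  have : p ≤ q ↔ toLex (p.n, p.a) ≤ toLex (q.n, q.a) := Iff.rfl
  rw [this, Prod.Lex.le_iff]; rfl

theorem wmul_mono {x y : A} (z : A) (h : x ≤ y) : mul z x ≤ mul z y :=
  (WChain.le_iff _ _).2 (mul_mono z ((WChain.le_iff _ _).1 h))

theorem wadd_mono {x y : A} (z : A) (h : x ≤ y) : add z x ≤ add z y :=
  (WChain.le_iff _ _).2 (add_mono z ((WChain.le_iff _ _).1 h))

theorem wmul_le_add (x y z : A) : mul x y ≤ add x z :=
  (WChain.le_iff _ _).2 (WA.trans (mul_le_left x y) (le_add_left x z))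

theorem cg_add_le (p q r : CG A) (h : p ≤ q) : r + p ≤ r + q := by
  rw [le_def] at h ⊢
  rw [add_n, add_n, add_a, add_a]
  have m1 := fun h => wmul_mono (x := p.a) (y := q.a) r.a h
  have m2 := fun h => wadd_mono (x := p.a) (y := q.a) r.a h
  have m3 := wmul_le_add r.a p.a q.a
  have m4 := le_one (add r.a q.a)
  split_ifs with h1 h2 h2
  · rcases h with h | ⟨h, h'⟩
    · left; omega
    · right; exact ⟨by omega, m1 h'⟩
  · rcases h with h | ⟨h, h'⟩
    · by_cases e : p.n + 1 = q.n
      · right; exact ⟨by omega, m3⟩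
      · left; omega
    · exact absurd (le_antisymm m4 (h1 ▸ m2 h')) h2
  · left; omega
  · rcases h with h | ⟨h, h'⟩
    · left; omega
    · right; exact ⟨by omega, m2 h'⟩

instance : IsOrderedAddMonoid (CG A) where
  add_le_add_left p q h r := by
    first
    | exact cg_add_le p q r h
    | (rw [cg_comm p, cg_comm q]; exact cg_add_le p q r h)

/-- The strong unit. -/
def u : CG A := ⟨1, zero, WChain.nontriv⟩

open Classical in
/-- The embedding of the chain into the unit interval of its group. -/
noncomputable def emb (a : A) : CG A := if h : a = one then u else ⟨0, a, h⟩

theorem emb_one : emb (one : A) = u := dif_pos rfl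

theorem emb_of_ne {a : A} (h : a ≠ one) : emb a = ⟨0, a, h⟩ := dif_neg h

theorem emb_eq_u {a : A} (h : emb a = u) : a = one := by
  by_contra hne
  rw [emb_of_ne hne] at h
  have := congrArg CG.n h
  simp [u] at this

theorem u_nonneg : (0 : CG A) ≤ u := by
  rw [le_def]; left; exact Int.zero_lt_one

theorem emb_zero : emb (zero : A) = 0 := emb_of_ne WChain.nontriv

theorem emb_mono {a b : A} (h : a ≤ b) : emb a ≤ emb b := by
  by_cases hb : b = one
  · subst hb
    by_cases ha : a = one
    · rw [ha]
    · rw [emb_one, emb_of_ne ha, le_def]; left; exact Int.zero_lt_one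
  · have ha : a ≠ one := fun e => hb (le_antisymm (le_one b) (e ▸ h))
    rw [emb_of_ne ha, emb_of_ne hb, le_def]
    right; exact ⟨rfl, h⟩

theorem emb_imp_aux {a b : A} (h : b < a) : emb a + emb (a ⇒ b) = u + emb b := by
  have hb : b ≠ one := fun e => absurd (le_one a) (not_le.2 (e ▸ h))
  have hc : a ⇒ b ≠ one := fun e => absurd ((WChain.le_iff _ _).2 e) (not_le.2 h)
  have hba : b ⇒ a = one := (WChain.le_iff _ _).1 h.le
  by_cases ha : a = one
  · rw [ha, one_imp, emb_one]
  · have h1 : add a (a ⇒ b) = one := by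
      unfold add
      rw [← contra b a, a1]
    have h2 : mul a (a ⇒ b) = b := by
      have := keyK' hba
      rwa [add, nn] at this
    rw [emb_of_ne ha, emb_of_ne hc, emb_of_ne hb]
    ext <;> simp [add_n, add_a, h1, h2, u, WA.zero_add, hb]

theorem emb_imp (a b : A) : emb (a ⇒ b) = min u (u - emb a + emb b) := by
  rcases le_or_gt a b with h | h
  · have h1 := emb_mono h
    rw [(WChain.le_iff _ _).1 h, emb_one]
    grind
  · have h1 := emb_mono h.le
    have h2 := emb_imp_aux h
    grind

theorem emb_neg (a : A) : emb (∼a) = u - emb a := by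
  have h : a ⇒ zero = ∼a := by unfold zero; rw [imp_neg, one_imp]
  have h1 := emb_imp a zero
  have h2 := emb_mono (zero_le a)
  rw [h, emb_zero] at h1
  rw [emb_zero] at h2
  grind

end CG

/-! ### Soundness of RPL in divisible ordered groups -/

section Soundness
variable {K : Type} [AddCommGroup K] [LinearOrder K] [IsOrderedAddMonoid K] [Module ℚ K]

/-- Evaluation in the unit interval `[0,u]` of a divisible ordered group. -/
def evK (u : K) (v : ℕ → K) : Fml → K
  | Fml.var n => v n
  | Fml.const q => q.1 • u
  | Fml.neg φ => u - evK u v φ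
  | Fml.imp φ ψ => min u (u - evK u v φ + evK u v ψ)

variable [IsStrictOrderedModule ℚ K]

theorem smul_mono' {u : K} (hu : 0 ≤ u) {q r : ℚ} (h : q ≤ r) : q • u ≤ r • u :=
  smul_le_smul_of_nonneg_right h hu

theorem evK_mem {u : K} (hu : 0 ≤ u) {v : ℕ → K} (hv : ∀ n, 0 ≤ v n ∧ v n ≤ u) (φ : Fml) :
    0 ≤ evK u v φ ∧ evK u v φ ≤ u := by
  induction φ with
  | var n => exact hv n
  | const q =>
    have h1 := smul_mono' hu q.2.1
    have h2 := smul_mono' hu q.2.2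
    rw [zero_smul] at h1
    rw [one_smul] at h2
    exact ⟨h1, h2⟩
  | neg φ ih => simp only [evK]; grind
  | imp φ ψ ih1 ih2 => simp only [evK]; grind

theorem evK_eqv {u : K} (hu : 0 ≤ u) {v : ℕ → K} {φ ψ : Fml} (h : evK u v φ = evK u v ψ) :
    evK u v (φ.eqv ψ) = u := by
  simp only [Fml.eqv, Fml.conj, Fml.odot, evK, h]
  grind

theorem evK_luk {u : K} (hu : 0 ≤ u) {v : ℕ → K} (hv : ∀ n, 0 ≤ v n ∧ v n ≤ u) {φ : Fml}
    (h : IsLukAxiom φ) : evK u v φ = u := by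
  cases h with
  | a1 φ ψ =>
    have h1 := evK_mem hu hv φ
    have h2 := evK_mem hu hv ψ
    simp only [evK]; grind
  | a2 φ ψ χ =>
    have h1 := evK_mem hu hv φ
    have h2 := evK_mem hu hv ψ
    have h3 := evK_mem hu hv χ
    simp only [evK]; grind
  | a3 φ ψ =>
    have h1 := evK_mem hu hv φ
    have h2 := evK_mem hu hv ψ
    simp only [evK]; grind
  | a4 φ ψ =>
    have h1 := evK_mem hu hv φ
    have h2 := evK_mem hu hv ψ
    simp only [evK]; grind

theorem evK_ax {u : K} (hu : 0 ≤ u) {v : ℕ → K} (hv : ∀ n, 0 ≤ v n ∧ v n ≤ u) {φ : Fml}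
    (h : IsRPLAxiom φ) : evK u v φ = u := by
  cases h with
  | luk h => exact evK_luk hu hv h
  | book_imp q r =>
    apply evK_eqv hu
    have e : (1 - q.1 + r.1) • u = u - q.1 • u + r.1 • u := by
      rw [add_smul, sub_smul, one_smul]
    simp only [evK, UQ.limp]
    rw [← e]
    rcases le_total 1 (1 - q.1 + r.1) with h | h
    · have := smul_mono' hu h
      rw [one_smul] at this
      rw [min_eq_left h, min_eq_left this, one_smul]
    · have := smul_mono' hu h
      rw [one_smul] at this
      rw [min_eq_right h, min_eq_right this]
  | book_neg q =>
    apply evK_eqv hu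
    simp only [evK, UQ.lneg]
    rw [sub_smul, one_smul]
  | book_one => exact one_smul ℚ u
  | book_zero =>
    have : (0 : ℚ) • u = 0 := zero_smul ℚ u
    show u - (0 : ℚ) • u = u
    rw [this, sub_zero]

theorem rpl_sound {u : K} (hu : 0 ≤ u) {v : ℕ → K} (hv : ∀ n, 0 ≤ v n ∧ v n ≤ u)
    {Γ : Set Fml} (hΓ : ∀ ψ ∈ Γ, evK u v ψ = u) {φ : Fml} (h : RPLProv Γ φ) :
    evK u v φ = u := by
  obtain ⟨L, hL, hl⟩ := h
  have key : ∀ m (hm : m < L.length), evK u v (L.get ⟨m, hm⟩) = u := by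
    intro m
    induction m using Nat.strong_induction_on with
    | _ m ih =>
      intro hm
      rcases hL ⟨m, hm⟩ with h | h | ⟨j, k, hj, hk, e⟩
      · exact evK_ax hu hv h
      · exact hΓ _ h
      · have h1 := ih j.1 hj j.2
        have h2 := ih k.1 hk k.2
        have h3 := evK_mem hu hv (L.get ⟨m, hm⟩)
        have e' : evK u v (L.get k) = _ := congrArg (evK u v) e
        simp only [evK] at e'
        rw [h1] at e'
        rw [h2] at e'
        grind
  have hmem := List.mem_of_getLast? hl
  obtain ⟨i, hi⟩ := List.get_of_mem hmem
  rw [← hi]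
  exact key i.1 i.2

end Soundness

/-! ### From Łukasiewicz proofs to RPL proofs -/

theorem proof_snoc {Γ : Set Fml} {L : List Fml} (h : IsRPLProofFrom Γ L) {φ : Fml}
    (hφ : IsRPLAxiom φ ∨ φ ∈ Γ ∨ ∃ ψ ∈ L, ψ.imp φ ∈ L) : IsRPLProofFrom Γ (L ++ [φ]) := by
  rintro ⟨i, hi⟩
  rw [List.length_append, List.length_singleton] at hi
  by_cases hlt : i < L.length
  · rcases h ⟨i, hlt⟩ with h | h | ⟨j, k, hj, hk, e⟩
    · left; simpa [List.getElem_append_left hlt] using h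
    · right; left; simpa [List.getElem_append_left hlt] using h
    · right; right
      have b1 := j.2
      have b2 := k.2
      refine ⟨⟨j.1, by rw [List.length_append]; omega⟩,
        ⟨k.1, by rw [List.length_append]; omega⟩, hj, hk, ?_⟩
      simpa [List.getElem_append_left hlt] using e
  · have : i = L.length := by omega
    subst this
    rcases hφ with h | h | ⟨ψ, h1, h2⟩
    · left; simpa using h
    · right; left; simpa using h
    · right; right
      obtain ⟨j, hj⟩ := List.get_of_mem h1
      obtain ⟨k, hk⟩ := List.get_of_mem h2
      have b1 := j.2
      have b2 := k.2
      refine ⟨⟨j.1, by rw [List.length_append]; omega⟩,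
        ⟨k.1, by rw [List.length_append]; omega⟩, j.2, k.2, ?_⟩
      simp only [List.get_eq_getElem] at hj hk
      simp [hj, hk]

theorem proof_append {Γ : Set Fml} {L M : List Fml} (h : IsRPLProofFrom Γ L)
    (h' : IsRPLProofFrom Γ M) : IsRPLProofFrom Γ (L ++ M) := by
  rintro ⟨i, hi⟩
  by_cases hlt : i < L.length
  · rcases h ⟨i, hlt⟩ with h | h | ⟨j, k, hj, hk, e⟩
    · left; simpa [List.getElem_append_left hlt] using h
    · right; left; simpa [List.getElem_append_left hlt] using h
    · right; right
      have b1 := j.2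
      have b2 := k.2
      refine ⟨⟨j.1, by rw [List.length_append]; omega⟩,
        ⟨k.1, by rw [List.length_append]; omega⟩, hj, hk, ?_⟩
      simpa [List.getElem_append_left hlt] using e
  · obtain ⟨m, rfl⟩ : ∃ m, i = L.length + m := ⟨i - L.length, by omega⟩
    have hm : m < M.length := by simpa using hi
    rcases h' ⟨m, hm⟩ with h | h | ⟨j, k, hj, hk, e⟩
    · left; simpa using h
    · right; left; simpa using h
    · right; right
      have hj' : j.1 < m := hj
      have hk' : k.1 < m := hk
      refine ⟨⟨L.length + j.1, by simp⟩, ⟨L.length + k.1, by simp⟩, ?_, ?_, ?_⟩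
      · show L.length + j.1 < L.length + m
        omega
      · show L.length + k.1 < L.length + m
        omega
      · simpa using e

theorem rpl_one {Γ : Set Fml} {φ : Fml} (h : IsRPLAxiom φ ∨ φ ∈ Γ) : RPLProv Γ φ := by
  refine ⟨[] ++ [φ], proof_snoc (L := []) (fun i => Fin.elim0 i) ?_, by simp⟩
  tauto

theorem luk_to_rpl {Γ : Set Fml} {φ : Fml} (h : LukProv Γ φ) : RPLProv Γ φ := by
  induction h with
  | ax h _ => exact rpl_one (Or.inl (.luk h))
  | one => exact rpl_one (Or.inl .book_one)
  | negzero => exact rpl_one (Or.inl .book_zero)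
  | hyp h => exact rpl_one (Or.inr h)
  | @mp χ ψ _ _ ih1 ih2 =>
    obtain ⟨L, hL, hl⟩ := ih1
    obtain ⟨M, hM, hm⟩ := ih2
    refine ⟨(L ++ M) ++ [ψ], proof_snoc (proof_append hL hM) (Or.inr (Or.inr ⟨χ, ?_, ?_⟩)),
      by simp⟩
    · exact List.mem_append_left _ (List.mem_of_getLast? hl)
    · exact List.mem_append_right _ (List.mem_of_getLast? hm)

/-! ### The Lindenbaum algebra -/

/-- Formulas of the language of Ł. -/
abbrev LF := {ψ : Fml // IsLFml ψ}

/-- Implication of formulas of Ł. -/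
def LF.imp (a b : LF) : LF := ⟨a.1.imp b.1, .imp a.2 b.2⟩
/-- Negation of formulas of Ł. -/
def LF.neg (a : LF) : LF := ⟨a.1.neg, .neg a.2⟩
/-- Truth. -/
def LF.one : LF := ⟨Fml.const 1, .one⟩

/-- Provability of a formula of Ł. -/
def Pr (T : Set Fml) (a : LF) : Prop := LukProv T a.1

section Syn
variable {T : Set Fml}

theorem Pr.mp {a b : LF} (h : Pr T a) (h' : Pr T (a.imp b)) : Pr T b := LukProv.mp h h'
theorem pr_one : Pr T LF.one := LukProv.one
theorem pr_a1 (a b : LF) : Pr T (a.imp (b.imp a)) :=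
  LukProv.ax (.a1 _ _) (a.imp (b.imp a)).2
theorem pr_a2 (a b c : LF) : Pr T ((a.imp b).imp ((b.imp c).imp (a.imp c))) :=
  LukProv.ax (.a2 _ _ _) ((a.imp b).imp ((b.imp c).imp (a.imp c))).2
theorem pr_a3 (a b : LF) : Pr T (((a.imp b).imp b).imp ((b.imp a).imp a)) :=
  LukProv.ax (.a3 _ _) (((a.imp b).imp b).imp ((b.imp a).imp a)).2
theorem pr_a4 (a b : LF) : Pr T ((a.neg.imp b.neg).imp (b.imp a)) :=
  LukProv.ax (.a4 _ _) ((a.neg.imp b.neg).imp (b.imp a)).2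

theorem Pr.tr {a b c : LF} (h : Pr T (a.imp b)) (h' : Pr T (b.imp c)) : Pr T (a.imp c) :=
  h'.mp (h.mp (pr_a2 a b c))

theorem pr_d1 (b c : LF) : Pr T (b.imp ((b.imp c).imp c)) :=
  (pr_a1 b (c.imp b)).tr (pr_a3 c b)

theorem pr_ex (a b c : LF) : Pr T ((a.imp (b.imp c)).imp (b.imp (a.imp c))) :=
  (pr_a2 a (b.imp c) c).tr ((pr_d1 b c).mp (pr_a2 _ _ _))

theorem pr_id (a : LF) : Pr T (a.imp a) :=
  pr_one.mp ((pr_a1 a LF.one).mp (pr_ex _ _ _))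

theorem pr_pre (a b c : LF) : Pr T ((a.imp b).imp ((c.imp a).imp (c.imp b))) :=
  (pr_a2 c a b).mp (pr_ex _ _ _)

theorem pr_nn (a : LF) : Pr T (a.neg.neg.imp a) := by
  have h1 : Pr T (a.neg.neg.imp (a.neg.imp LF.one.neg)) :=
    (pr_a1 a.neg.neg LF.one.neg.neg).tr (pr_a4 LF.one.neg a.neg)
  have h2 := h1.tr (pr_a4 a LF.one)
  exact pr_one.mp (h2.mp (pr_ex _ _ _))

theorem pr_nn' (a : LF) : Pr T (a.imp a.neg.neg) := (pr_nn a.neg).mp (pr_a4 _ _)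

theorem pr_contra (a b : LF) : Pr T ((a.imp b).imp (b.neg.imp a.neg)) := by
  have h1 : Pr T ((a.imp b).imp (a.neg.neg.imp b)) := (pr_nn a).mp (pr_a2 _ _ _)
  have h2 : Pr T ((a.neg.neg.imp b).imp (a.neg.neg.imp b.neg.neg)) := (pr_nn' b).mp (pr_pre _ _ _)
  exact (h1.tr h2).tr (pr_a4 _ _)

end Syn

/-- Provable equivalence. -/
def lSetoid (T : Set Fml) : Setoid LF where
  r a b := Pr T (a.imp b) ∧ Pr T (b.imp a)
  iseqv := ⟨fun a => ⟨pr_id a, pr_id a⟩, fun h => ⟨h.2, h.1⟩,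
    fun h h' => ⟨h.1.tr h'.1, h'.2.tr h.2⟩⟩

/-- The Lindenbaum algebra of a theory. -/
def Lind (T : Set Fml) : Type := Quotient (lSetoid T)

/-- The class of a formula. -/
def cl (T : Set Fml) (a : LF) : Lind T := Quotient.mk (lSetoid T) a

theorem cl_eq {T : Set Fml} {a b : LF} :
    cl T a = cl T b ↔ Pr T (a.imp b) ∧ Pr T (b.imp a) :=
  ⟨fun h => Quotient.exact h, fun h => Quotient.sound h⟩

theorem cl_eq_one {T : Set Fml} {a : LF} : cl T a = cl T LF.one ↔ Pr T a := by
  rw [cl_eq]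
  exact ⟨fun h => pr_one.mp h.2, fun h => ⟨pr_one.mp (pr_a1 _ _), h.mp (pr_a1 _ _)⟩⟩

/-- Implication on the Lindenbaum algebra. -/
def Lind.imp {T : Set Fml} : Lind T → Lind T → Lind T :=
  Quotient.lift₂ (fun a b => cl T (a.imp b)) (by
    intro a b a' b' h h'
    exact cl_eq.2 ⟨(h.2.mp (pr_a2 _ _ _)).tr (h'.1.mp (pr_pre _ _ _)),
      (h.1.mp (pr_a2 _ _ _)).tr (h'.2.mp (pr_pre _ _ _))⟩)

/-- Negation on the Lindenbaum algebra. -/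
def Lind.neg {T : Set Fml} : Lind T → Lind T :=
  Quotient.lift (fun a => cl T a.neg) (by
    intro a a' h
    exact cl_eq.2 ⟨h.2.mp (pr_contra _ _), h.1.mp (pr_contra _ _)⟩)

theorem cl_surj {T : Set Fml} (x : Lind T) : ∃ a, cl T a = x := Quotient.exists_rep x

theorem cl_imp {T : Set Fml} (a b : LF) : Lind.imp (cl T a) (cl T b) = cl T (a.imp b) := rfl
theorem cl_neg {T : Set Fml} (a : LF) : Lind.neg (cl T a) = cl T a.neg := rfl

instance (T : Set Fml) : WA (Lind T) where
  imp := Lind.imp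
  neg := Lind.neg
  one := cl T LF.one
  one_imp x := by
    obtain ⟨a, rfl⟩ := cl_surj x
    exact cl_eq.2 ⟨pr_one.mp (pr_d1 _ _), pr_a1 _ _⟩
  a1 x y := by
    obtain ⟨a, rfl⟩ := cl_surj x
    obtain ⟨b, rfl⟩ := cl_surj y
    exact cl_eq_one.2 (pr_a1 _ _)
  a2 x y z := by
    obtain ⟨a, rfl⟩ := cl_surj x
    obtain ⟨b, rfl⟩ := cl_surj y
    obtain ⟨c, rfl⟩ := cl_surj z
    exact cl_eq_one.2 (pr_a2 _ _ _)
  a3 x y := by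
    obtain ⟨a, rfl⟩ := cl_surj x
    obtain ⟨b, rfl⟩ := cl_surj y
    exact cl_eq.2 ⟨pr_a3 _ _, pr_a3 _ _⟩
  ex x y z := by
    obtain ⟨a, rfl⟩ := cl_surj x
    obtain ⟨b, rfl⟩ := cl_surj y
    obtain ⟨c, rfl⟩ := cl_surj z
    exact cl_eq.2 ⟨pr_ex _ _ _, pr_ex _ _ _⟩
  contra x y := by
    obtain ⟨a, rfl⟩ := cl_surj x
    obtain ⟨b, rfl⟩ := cl_surj y
    exact cl_eq.2 ⟨pr_a4 _ _, pr_contra _ _⟩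
  nn x := by
    obtain ⟨a, rfl⟩ := cl_surj x
    exact cl_eq.2 ⟨pr_nn _, pr_nn' _⟩
  antisymm x y := by
    obtain ⟨a, rfl⟩ := cl_surj x
    obtain ⟨b, rfl⟩ := cl_surj y
    intro h h'
    exact cl_eq.2 ⟨cl_eq_one.1 h, cl_eq_one.1 h'⟩

theorem cl_eq_wone {T : Set Fml} {a : LF} : cl T a = WA.one ↔ Pr T a := cl_eq_one

theorem luk_LF {T : Set Fml} (hT : ∀ ψ ∈ T, IsLFml ψ) {φ : Fml} (h : LukProv T φ) :
    IsLFml φ := by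
  induction h with
  | ax _ h => exact h
  | one => exact .one
  | negzero => exact .neg .zero
  | hyp h => exact hT _ h
  | mp _ _ _ ih =>
    cases ih with
    | imp _ h => exact h

/-- Disjunction. -/
def LF.or (a b : LF) : LF := (a.imp b).imp b

theorem pr_or {T : Set Fml} {a b : LF} :
    Pr T (a.or b) ↔ (cl T a ⇒ cl T b) ⇒ cl T b = WA.one := cl_eq_wone.symm

theorem pr_or_left {T : Set Fml} {a b : LF} (h : Pr T a) : Pr T (a.or b) := h.mp (pr_d1 _ _)

theorem cases_aux {T : Set Fml} (hT : ∀ ψ ∈ T, IsLFml ψ) (a g : LF) (hag : Pr T (a.or g))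
    {χ : Fml} (h : LukProv (insert a.1 T) χ) :
    ∀ hχ : IsLFml χ, Pr T (LF.or ⟨χ, hχ⟩ g) := by
  have hT' : ∀ ψ ∈ insert a.1 T, IsLFml ψ := by
    rintro ψ (rfl | h)
    · exact a.2
    · exact hT _ h
  induction h with
  | ax h _ => intro hχ; exact pr_or_left (LukProv.ax h hχ)
  | one => intro hχ; exact pr_or_left LukProv.one
  | negzero => intro hχ; exact pr_or_left LukProv.negzero
  | hyp h =>
    intro hχ
    rcases h with rfl | h
    · exact hag
    · exact pr_or_left (LukProv.hyp h)
  | @mp φ ψ h1 h2 ih1 ih2 =>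
    intro hχ
    have hφ := luk_LF hT' h1
    have e1 := pr_or.1 (ih1 hφ)
    have e2 := pr_or.1 (ih2 (.imp hφ hχ))
    exact pr_or.2 (WA.join_mp (x := cl T ⟨φ, hφ⟩) (d := cl T ⟨ψ, hχ⟩) e1 e2)

theorem cases_pr {T : Set Fml} (hT : ∀ ψ ∈ T, IsLFml ψ) (a b f : LF) (hab : Pr T (a.or b))
    (ha : LukProv (insert a.1 T) f.1) (hb : LukProv (insert b.1 T) f.1) : Pr T f := by
  have h1 : Pr T (f.or b) := cases_aux hT a b hab ha f.2
  have h2 : Pr T (b.or f) := h1.mp (pr_a3 _ _)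
  have h3 : Pr T (f.or f) := cases_aux hT b f h2 hb f.2
  exact (pr_id f).mp h3

theorem luk_mono {S T : Set Fml} (h : S ⊆ T) {φ : Fml} (hp : LukProv S φ) : LukProv T φ := by
  induction hp with
  | ax h h' => exact .ax h h'
  | one => exact .one
  | negzero => exact .negzero
  | hyp h' => exact .hyp (h h')
  | mp _ _ ih1 ih2 => exact .mp ih1 ih2

theorem luk_compact {c : Set (Set Fml)} (hc : IsChain (· ⊆ ·) c) (hne : c.Nonempty) {φ : Fml}
    (h : LukProv (⋃₀ c) φ) : ∃ t ∈ c, LukProv t φ := by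
  obtain ⟨t0, ht0⟩ := hne
  induction h with
  | ax h h' => exact ⟨t0, ht0, .ax h h'⟩
  | one => exact ⟨t0, ht0, .one⟩
  | negzero => exact ⟨t0, ht0, .negzero⟩
  | hyp h' =>
    obtain ⟨t, ht, h⟩ := h'
    exact ⟨t, ht, .hyp h⟩
  | mp _ _ ih1 ih2 =>
    obtain ⟨s, hs, h1⟩ := ih1
    obtain ⟨t, ht, h2⟩ := ih2
    rcases hc.total hs ht with h | h
    · exact ⟨t, ht, .mp (luk_mono h h1) h2⟩
    · exact ⟨s, hs, .mp h1 (luk_mono h h2)⟩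

theorem exists_prime {Γ : Set Fml} (hΓ : ∀ ψ ∈ Γ, IsLFml ψ) (f : LF) (hf : ¬ Pr Γ f) :
    ∃ T, Γ ⊆ T ∧ ¬ Pr T f ∧ ∀ a b : LF, Pr T (a.imp b) ∨ Pr T (b.imp a) := by
  obtain ⟨T, hΓT, hmax⟩ := zorn_subset_nonempty
    {T : Set Fml | (∀ ψ ∈ T, IsLFml ψ) ∧ ¬ Pr T f} (by
      intro c hcS hc hne
      refine ⟨⋃₀ c, ⟨?_, ?_⟩, fun s hs => Set.subset_sUnion_of_mem hs⟩
      · rintro ψ ⟨t, ht, h⟩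
        exact (hcS ht).1 _ h
      · intro h
        obtain ⟨t, ht, h'⟩ := luk_compact hc hne h
        exact (hcS ht).2 h') Γ ⟨hΓ, hf⟩
  have hT := hmax.prop
  have step : ∀ p : LF, ¬ Pr T p → LukProv (insert p.1 T) f.1 := by
    intro p hp
    by_contra hcon
    have hins : insert p.1 T ∈ {T : Set Fml | (∀ ψ ∈ T, IsLFml ψ) ∧ ¬ Pr T f} := by
      refine ⟨?_, hcon⟩
      rintro ψ (rfl | h)
      · exact p.2
      · exact hT.1 _ h
    have := hmax.le_of_ge hins (Set.subset_insert _ _)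
    exact hp (LukProv.hyp (this (Set.mem_insert _ _)))
  refine ⟨T, hΓT, hT.2, ?_⟩
  intro a b
  by_contra! hcon
  refine hT.2 (cases_pr hT.1 (a.imp b) (b.imp a) f ?_ (step _ hcon.1) (step _ hcon.2))
  exact pr_or.2 (WA.prelin (cl T a) (cl T b))

open Classical in
/-- The Lindenbaum algebra of a prime theory is a chain. -/
@[reducible] noncomputable def lindChain {T : Set Fml} (h : ∀ a b : LF, Pr T (a.imp b) ∨ Pr T (b.imp a))
    (f : LF) (hf : ¬ Pr T f) : WChain (Lind T) :=
  { (inferInstance : WA (Lind T)) with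
    le := fun x y => x ⇒ y = WA.one
    le_refl := WA.refl
    le_trans := fun _ _ _ h h' => WA.trans h h'
    le_antisymm := WA.antisymm
    le_total := by
      intro x y
      obtain ⟨a, rfl⟩ := cl_surj x
      obtain ⟨b, rfl⟩ := cl_surj y
      exact (h a b).imp cl_eq_wone.2 cl_eq_wone.2
    toDecidableLE := Classical.decRel _
    le_iff := fun _ _ => Iff.rfl
    nontriv := by
      intro e
      apply hf
      have := WA.zero_imp (cl T f)
      have e' : (WA.zero : Lind T) = WA.one := e
      rw [e', WA.one_imp] at this
      exact cl_eq_wone.1 this }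

theorem rpl_to_luk {Γ : Set Fml} (hΓ : ∀ ψ ∈ Γ, IsLFml ψ) (f : LF) (h : RPLProv Γ f.1) :
    Pr Γ f := by
  by_contra hf
  obtain ⟨T, hΓT, hTf, htot⟩ := exists_prime hΓ f hf
  let _ : WChain (Lind T) := lindChain htot f hTf
  let j : CG (Lind T) →+o DivisibleHull (CG (Lind T)) := DivisibleHull.coeOrderAddMonoidHom _
  have hj : Function.Injective j := DivisibleHull.coe_injective
  have hmin : ∀ x y, j (min x y) = min (j x) (j y) := fun x y => j.monotone'.map_min
  let u := j CG.u
  let v : ℕ → DivisibleHull (CG (Lind T)) := fun n => j (CG.emb (cl T ⟨Fml.var n, .var n⟩))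
  have hu : 0 ≤ u := by
    have := j.monotone' (CG.u_nonneg (A := Lind T))
    simpa using this
  have hv : ∀ n, 0 ≤ v n ∧ v n ≤ u := by
    intro n
    constructor
    · have := j.monotone' (CG.emb_mono (CG.zero_le (cl T ⟨Fml.var n, .var n⟩)))
      rw [CG.emb_zero] at this
      simpa using this
    · have := j.monotone' (CG.emb_mono (CG.le_one (cl T ⟨Fml.var n, .var n⟩)))
      rw [CG.emb_one] at this
      exact this
  have key : ∀ ψ (hψ : IsLFml ψ), evK u v ψ = j (CG.emb (cl T ⟨ψ, hψ⟩)) := by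
    intro ψ hψ
    induction hψ with
    | var n => rfl
    | zero =>
      have h1 : cl T ⟨Fml.const 0, .zero⟩ = WA.zero := by
        have h2 : cl T (LF.neg ⟨Fml.const 0, .zero⟩) = WA.one := cl_eq_wone.2 LukProv.negzero
        have h3 : ∼(cl T ⟨Fml.const 0, .zero⟩) = WA.one := h2
        rw [WA.zero, ← h3, WA.nn]
      have h2 : CG.emb (cl T ⟨Fml.const 0, .zero⟩) = 0 := by rw [h1]; exact CG.emb_zero
      rw [h2, map_zero]
      exact zero_smul ℚ u
    | one =>
      have h1 : CG.emb (cl T ⟨Fml.const 1, .one⟩) = CG.u := CG.emb_one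
      rw [h1]
      exact one_smul ℚ u
    | @neg φ hφ ih =>
      have h1 : CG.emb (cl T ⟨φ.neg, .neg hφ⟩) = CG.u - CG.emb (cl T ⟨φ, hφ⟩) :=
        CG.emb_neg (cl T ⟨φ, hφ⟩)
      rw [h1, map_sub, ← ih]
      rfl
    | @imp φ χ hφ hχ ih1 ih2 =>
      have h1 : CG.emb (cl T ⟨φ.imp χ, .imp hφ hχ⟩) =
          min CG.u (CG.u - CG.emb (cl T ⟨φ, hφ⟩) + CG.emb (cl T ⟨χ, hχ⟩)) :=
        CG.emb_imp (cl T ⟨φ, hφ⟩) (cl T ⟨χ, hχ⟩)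
      rw [h1, hmin, map_add, map_sub, ← ih1, ← ih2]
      rfl
  have hs := rpl_sound hu hv (Γ := Γ) (by
    intro ψ hψ
    rw [key ψ (hΓ _ hψ)]
    have h1 : cl T ⟨ψ, hΓ _ hψ⟩ = WA.one := cl_eq_wone.2 (LukProv.hyp (hΓT hψ))
    rw [h1]
    exact congrArg j CG.emb_one) h
  rw [key f.1 f.2] at hs
  exact hTf (cl_eq_wone.1 (CG.emb_eq_u (hj hs)))

end RPLCons

/-- propositional RPL is a conservative expansion of propositional
Łukasiewicz logic: for every set `Γ ∪ {φ}` of formulas of the language of Ł (containing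
no rational constants other than `0̄` and `1̄`), `Γ ⊢_RPL φ` iff `Γ ⊢_Ł φ`. -/
theorem rpl_conservative_over_luk (Γ : Set Fml) (φ : Fml)
    (hΓ : ∀ ψ ∈ Γ, IsLFml ψ) (hφ : IsLFml φ) :
    RPLProv Γ φ ↔ LukProv Γ φ :=
  ⟨fun h => RPLCons.rpl_to_luk hΓ ⟨φ, hφ⟩ h, RPLCons.luk_to_rpl⟩
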